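/- For every h = (h₁,…,h_n) ∈ Π_{i=1}^n A_i the function Σh belongs to H_w⁰ (Σh is absolutely continuous with ∫₀^∞ ((Σh)'(x))² w(x) dx < ∞ and Σh(x) → 0 as x → ∞), and there exists a constant C₅ > 0, depending only on w, n and the functions Ψ₁,…,Ψ_n, such that for all g = (g₁,…,g_n) and h = (h₁,…,h_n) in Π_{i=1}^n A_i: ‖Σg − Σh‖_w ≤ C₅ Σ_{i=1}^n (1 + ‖h_i‖_w + ‖g_i‖_w + ‖g_i‖²_w) ‖g_i − h_i‖_w. In particular, Σ : Π_{i=1}^n A_i → H_w⁰ is continuous. -/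

import Mathlib

open MeasureTheory Set Real Filter ENNReal

/-- A weight: a nondecreasing `C¹` function `w : ℝ₊ → [1,∞)` with `w^{-1/3} ∈ L¹(ℝ₊)`. -/
def IsWeight (w : ℝ → ℝ) : Prop :=
  (∀ x, 0 ≤ x → 1 ≤ w x) ∧ MonotoneOn w (Set.Ici 0) ∧ ContDiffOn ℝ 1 w (Set.Ici 0) ∧
    MeasureTheory.IntegrableOn (fun x => w x ^ (-(1 / 3 : ℝ))) (Set.Ioi 0)

/-- Membership in `H_w⁰`, carrying the weak derivative `f'` as data: `f` is absolutely
continuous on `ℝ₊` with locally integrable weak derivative `f'`, has finite weighted energy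
`∫₀^∞ f'(x)² w(x) dx < ∞`, and `f(x) → 0` as `x → ∞`. -/
def MemHw0 (w f f' : ℝ → ℝ) : Prop :=
  (∀ x, 0 ≤ x → IntervalIntegrable f' MeasureTheory.volume 0 x) ∧
  (∀ x, 0 ≤ x → f x = f 0 + ∫ y in (0 : ℝ)..x, f' y) ∧
  (∫⁻ x in Set.Ioi (0 : ℝ), ENNReal.ofReal (f' x ^ 2 * w x)) < ⊤ ∧
  Filter.Tendsto f Filter.atTop (nhds 0)

/-- The norm `‖f‖_w` of an element of `H_w⁰` (where `f(∞) = 0`), expressed through its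
weak derivative: `‖f‖_w = (∫₀^∞ f'(x)² w(x) dx)^{1/2}`. -/
noncomputable def nw (w f' : ℝ → ℝ) : ℝ :=
  Real.sqrt ((∫⁻ x in Set.Ioi (0 : ℝ), ENNReal.ofReal (f' x ^ 2 * w x)).toReal)

/-- `T f (x) = ∫₀ˣ f(η) dη`; membership `f ∈ A_i` means `-T f (x) ∈ [c,d]` for all `x ≥ 0`. -/
def InA (c d : ℝ) (f : ℝ → ℝ) : Prop :=
  ∀ x, 0 ≤ x → -(∫ y in (0 : ℝ)..x, f y) ∈ Set.Icc c d

/-- `Σh(x) = -Σᵢ hᵢ(x) Ψᵢ'(-∫₀ˣ hᵢ(η) dη)`. -/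
noncomputable def SigmaMap {n : ℕ} (Ψ : Fin n → ℝ → ℝ) (h : Fin n → ℝ → ℝ) (x : ℝ) : ℝ :=
  -∑ i, h i x * deriv (Ψ i) (-(∫ y in (0 : ℝ)..x, h i y))

/-- The (weak) derivative of `Σh`:
`(Σh)'(x) = Σᵢ (-hᵢ'(x) Ψᵢ'(-∫₀ˣ hᵢ) + hᵢ(x)² Ψᵢ''(-∫₀ˣ hᵢ))`. -/
noncomputable def SigmaDeriv {n : ℕ} (Ψ : Fin n → ℝ → ℝ) (h h' : Fin n → ℝ → ℝ) (x : ℝ) : ℝ :=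
  ∑ i, (-(h' i x) * deriv (Ψ i) (-(∫ y in (0 : ℝ)..x, h i y))
        + h i x ^ 2 * deriv (deriv (Ψ i)) (-(∫ y in (0 : ℝ)..x, h i y)))


/-- Lebesgue measure on `ℝ₊`. -/
noncomputable abbrev volPos : Measure ℝ := volume.restrict (Ioi 0)

section WeightedNorm

variable {w f g : ℝ → ℝ}

lemma lintegral_weighted_sq_eq_eLpNorm_sq (hw : ∀ x, 0 ≤ x → 1 ≤ w x) (f : ℝ → ℝ) :
    ∫⁻ x in Ioi (0 : ℝ), ENNReal.ofReal (f x ^ 2 * w x) =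
      eLpNorm (fun x => f x * √(w x)) 2 volPos ^ 2 := by
  have h2 := eLpNorm_nnreal_pow_eq_lintegral (μ := volPos) (f := fun x => f x * √(w x))
    (p := 2) (by norm_num)
  simp only [NNReal.coe_ofNat, ENNReal.rpow_ofNat, ENNReal.coe_ofNat] at h2
  rw [h2]
  refine setLIntegral_congr_fun measurableSet_Ioi fun x hx => ?_
  have hwx : 0 ≤ w x := zero_le_one.trans (hw x (le_of_lt hx))
  rw [← enorm_pow, Real.enorm_of_nonneg (by positivity), mul_pow, Real.sq_sqrt hwx]

lemma nw_eq_toReal_eLpNorm (hw : ∀ x, 0 ≤ x → 1 ≤ w x) (f : ℝ → ℝ) :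
    nw w f = (eLpNorm (fun x => f x * √(w x)) 2 volPos).toReal := by
  rw [nw, lintegral_weighted_sq_eq_eLpNorm_sq hw, ENNReal.toReal_pow,
    Real.sqrt_sq ENNReal.toReal_nonneg]

lemma lintegral_weighted_sq_lt_top_iff (hw : ∀ x, 0 ≤ x → 1 ≤ w x) (f : ℝ → ℝ) :
    ∫⁻ x in Ioi (0 : ℝ), ENNReal.ofReal (f x ^ 2 * w x) < ⊤ ↔
      eLpNorm (fun x => f x * √(w x)) 2 volPos < ⊤ := by
  rw [lintegral_weighted_sq_eq_eLpNorm_sq hw]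
  simp [lt_top_iff_ne_top]

lemma nw_nonneg (w f : ℝ → ℝ) : 0 ≤ nw w f := Real.sqrt_nonneg _

lemma nw_mono (hw : ∀ x, 0 ≤ x → 1 ≤ w x) (hg : MemLp (fun x => g x * √(w x)) 2 volPos)
    (hfg : ∀ x, 0 < x → |f x| ≤ g x) : nw w f ≤ nw w g := by
  rw [nw_eq_toReal_eLpNorm hw, nw_eq_toReal_eLpNorm hw]
  refine ENNReal.toReal_mono hg.2.ne (eLpNorm_mono_ae_real ?_)
  filter_upwards [ae_restrict_mem measurableSet_Ioi] with x hx
  rw [norm_mul, Real.norm_of_nonneg (Real.sqrt_nonneg _)]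
  exact mul_le_mul_of_nonneg_right (hfg x hx) (Real.sqrt_nonneg _)

lemma nw_add_le (hw : ∀ x, 0 ≤ x → 1 ≤ w x) (hf : MemLp (fun x => f x * √(w x)) 2 volPos)
    (hg : MemLp (fun x => g x * √(w x)) 2 volPos) :
    nw w (fun x => f x + g x) ≤ nw w f + nw w g := by
  simp only [nw_eq_toReal_eLpNorm hw, add_mul]
  rw [← ENNReal.toReal_add hf.2.ne hg.2.ne]
  exact ENNReal.toReal_mono (ENNReal.add_ne_top.2 ⟨hf.2.ne, hg.2.ne⟩)
    (eLpNorm_add_le hf.1 hg.1 (by norm_num))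

lemma nw_const_mul (hw : ∀ x, 0 ≤ x → 1 ≤ w x) (a : ℝ) (f : ℝ → ℝ) :
    nw w (fun x => a * f x) = |a| * nw w f := by
  simp only [nw_eq_toReal_eLpNorm hw, mul_assoc]
  have := eLpNorm_const_smul a (fun x => f x * √(w x)) 2 volPos
  simp only [Pi.smul_def, smul_eq_mul] at this
  rw [this, ENNReal.toReal_mul, toReal_enorm, Real.norm_eq_abs]

lemma nw_abs (w f : ℝ → ℝ) : nw w (fun x => |f x|) = nw w f := by
  simp only [nw, sq_abs]

lemma nw_sum_le {ι : Type*} (hw : ∀ x, 0 ≤ x → 1 ≤ w x) (s : Finset ι) {F : ι → ℝ → ℝ}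
    (hF : ∀ i, MemLp (fun x => F i x * √(w x)) 2 volPos) :
    nw w (fun x => ∑ i ∈ s, F i x) ≤ ∑ i ∈ s, nw w (F i) := by
  classical
  induction s using Finset.induction_on with
  | empty => simp [nw]
  | insert i s his ih =>
    simp only [Finset.sum_insert his]
    refine (nw_add_le hw (hF i) ?_).trans (by gcongr)
    simpa only [Finset.sum_mul] using memLp_finsetSum s fun j _ => hF j

lemma sq_nw_eq_integral (hw : ∀ x, 0 ≤ x → 1 ≤ w x)
    (hf : MemLp (fun x => f x * √(w x)) 2 volPos) :
    nw w f ^ 2 = ∫ x in Ioi (0 : ℝ), (f x * √(w x)) ^ 2 := by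
  have hnn : ∀ x, 0 ≤ (f x * √(w x)) ^ 2 := fun x => sq_nonneg _
  rw [nw, Real.sq_sqrt ENNReal.toReal_nonneg,
    integral_eq_lintegral_of_nonneg_ae (Eventually.of_forall hnn)
      ((memLp_two_iff_integrable_sq hf.1).1 hf).1]
  congr 1
  refine setLIntegral_congr_fun measurableSet_Ioi fun x hx => ?_
  rw [mul_pow, Real.sq_sqrt (zero_le_one.trans (hw x (le_of_lt hx)))]

end WeightedNorm

lemma MemHw0.aestronglyMeasurable {w f f' : ℝ → ℝ} (hf : MemHw0 w f f') :
    AEStronglyMeasurable f' volPos := by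
  have hU : Ioi (0 : ℝ) = ⋃ n : ℕ, Ioc (0 : ℝ) n := by
    ext x
    simp only [mem_Ioi, mem_iUnion, mem_Ioc, exists_and_left, iff_self_and]
    exact fun _ => exists_nat_ge x
  rw [volPos, hU, aestronglyMeasurable_iUnion_iff]
  exact fun n => (hf.1 n n.cast_nonneg).1.1

/-- The product rule for two functions that are primitives of integrable functions. -/
lemma intervalIntegrable_mul_and_integral_eq {u u' q q' : ℝ → ℝ} {b : ℝ} (hb : 0 ≤ b)
    (hu' : IntervalIntegrable u' volume 0 b) (hq' : IntervalIntegrable q' volume 0 b)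
    (hu : ∀ x ∈ Icc 0 b, u x = u 0 + ∫ y in (0 : ℝ)..x, u' y)
    (hq : ∀ x ∈ Icc 0 b, q x = q 0 + ∫ y in (0 : ℝ)..x, q' y) :
    IntervalIntegrable (fun x => u' x * q x + u x * q' x) volume 0 b ∧
      u b * q b = u 0 * q 0 + ∫ x in (0 : ℝ)..b, (u' x * q x + u x * q' x) := by
  have hac : ∀ {v v' : ℝ → ℝ}, IntervalIntegrable v' volume 0 b →
      AbsolutelyContinuousOnInterval (fun x => v 0 + ∫ y in (0 : ℝ)..x, v' y) 0 b := by
    intro v v' hv'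
    have h0 : AbsolutelyContinuousOnInterval (fun _ : ℝ => v 0) 0 b :=
      (LipschitzWith.const (v 0)).lipschitzOnWith.absolutelyContinuousOnInterval
    exact h0.add (hv'.absolutelyContinuousOnInterval_intervalIntegral (by simp))
  have hU := hac (v := u) hu'
  have hQ := hac (v := q) hq'
  have hucont : ContinuousOn u (uIcc 0 b) := hU.continuousOn.congr fun x hx => hu x (by
    rwa [uIcc_of_le hb] at hx)
  have hqcont : ContinuousOn q (uIcc 0 b) := hQ.continuousOn.congr fun x hx => hq x (by
    rwa [uIcc_of_le hb] at hx)
  refine ⟨(hu'.mul_continuousOn hqcont).add (hq'.continuousOn_mul hucont), ?_⟩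
  have key := hU.integral_deriv_mul_eq_sub hQ
  have hbb : b ∈ Icc 0 b := ⟨hb, le_rfl⟩
  simp only [← hu b hbb, ← hq b hbb, intervalIntegral.integral_same, add_zero] at key
  rw [eq_comm, ← eq_sub_iff_add_eq', ← key]
  refine intervalIntegral.integral_congr_ae ?_
  filter_upwards [hu'.ae_hasDerivAt_integral, hq'.ae_hasDerivAt_integral] with x h1 h2 hx
  have hx' : x ∈ uIcc 0 b := uIoc_subset_uIcc hx
  have hxI : x ∈ Icc 0 b := by rwa [uIcc_of_le hb] at hx'
  rw [((h1 hx' 0 (by simp)).const_add (u 0)).deriv, ((h2 hx' 0 (by simp)).const_add (q 0)).deriv,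
    ← hu x hxI, ← hq x hxI]

/-- The integrable profile `w^{-1/3}` of a weight `w`. -/
noncomputable def cubeRootInv (w : ℝ → ℝ) (x : ℝ) : ℝ := w x ^ (-(1 / 3 : ℝ))

namespace IsWeight

variable {w : ℝ → ℝ}

lemma cubeRootInv_pos (hw : IsWeight w) {x : ℝ} (hx : 0 ≤ x) : 0 < cubeRootInv w x :=
  Real.rpow_pos_of_pos (zero_lt_one.trans_le (hw.1 x hx)) _

lemma cubeRootInv_pow_three_mul (hw : IsWeight w) {x : ℝ} (hx : 0 ≤ x) :
    cubeRootInv w x ^ 3 * w x = 1 := by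
  have hwx : 0 < w x := zero_lt_one.trans_le (hw.1 x hx)
  rw [cubeRootInv, ← Real.rpow_natCast, ← Real.rpow_mul hwx.le]
  norm_num [Real.rpow_neg_one]
  exact inv_mul_cancel₀ hwx.ne'

lemma cubeRootInv_anti (hw : IsWeight w) {x y : ℝ} (hx : 0 ≤ x) (hxy : x ≤ y) :
    cubeRootInv w y ≤ cubeRootInv w x :=
  Real.rpow_le_rpow_of_nonpos (zero_lt_one.trans_le (hw.1 x hx))
    (hw.2.1 hx (hx.trans hxy) hxy) (by norm_num)

lemma integrableOn_cubeRootInv (hw : IsWeight w) :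
    IntegrableOn (cubeRootInv w) (Ioi 0) := hw.2.2.2

lemma continuousOn (hw : IsWeight w) : ContinuousOn w (Ici 0) :=
  hw.2.2.1.continuousOn

lemma aestronglyMeasurable_sqrt (hw : IsWeight w) :
    AEStronglyMeasurable (fun x => √(w x)) volPos :=
  ((hw.continuousOn.mono Ioi_subset_Ici_self).sqrt).aestronglyMeasurable measurableSet_Ioi

lemma sq_cubeRootInv_mul_sqrt (hw : IsWeight w) {x : ℝ} (hx : 0 ≤ x) :
    (cubeRootInv w x ^ 2 * √(w x)) ^ 2 = cubeRootInv w x := by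
  rw [mul_pow, Real.sq_sqrt (zero_le_one.trans (hw.1 x hx))]
  linear_combination cubeRootInv w x * hw.cubeRootInv_pow_three_mul hx

lemma memLp_sq_cubeRootInv (hw : IsWeight w) :
    MemLp (fun x => cubeRootInv w x ^ 2 * √(w x)) 2 volPos := by
  refine (memLp_two_iff_integrable_sq
    ((hw.integrableOn_cubeRootInv.1.pow 2).mul hw.aestronglyMeasurable_sqrt)).2 ?_
  refine hw.integrableOn_cubeRootInv.congr ?_
  filter_upwards [ae_restrict_mem measurableSet_Ioi] with x hx
  exact (hw.sq_cubeRootInv_mul_sqrt (le_of_lt hx)).symm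

lemma integral_cubeRootInv_nonneg (hw : IsWeight w) :
    0 ≤ ∫ x in Ioi (0 : ℝ), cubeRootInv w x :=
  setIntegral_nonneg measurableSet_Ioi fun _ hx => (hw.cubeRootInv_pos (le_of_lt hx)).le

lemma nw_sq_cubeRootInv (hw : IsWeight w) :
    nw w (fun x => cubeRootInv w x ^ 2) = √(∫ x in Ioi (0 : ℝ), cubeRootInv w x) := by
  rw [eq_comm, Real.sqrt_eq_iff_eq_sq hw.integral_cubeRootInv_nonneg (nw_nonneg _ _),
    sq_nw_eq_integral hw.1 hw.memLp_sq_cubeRootInv]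
  exact setIntegral_congr_fun measurableSet_Ioi fun x hx =>
    (hw.sq_cubeRootInv_mul_sqrt (le_of_lt hx)).symm

end IsWeight

namespace MemHw0

variable {w f f' : ℝ → ℝ}

lemma memLp (hw : IsWeight w) (hf : MemHw0 w f f') :
    MemLp (fun x => f' x * √(w x)) 2 volPos :=
  ⟨hf.aestronglyMeasurable.mul hw.aestronglyMeasurable_sqrt,
    (lintegral_weighted_sq_lt_top_iff hw.1 f').1 hf.2.2.1⟩

lemma sub_eq_integral (hf : MemHw0 w f f') {x y : ℝ} (hx : 0 ≤ x) (hy : 0 ≤ y) :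
    f y - f x = ∫ t in x..y, f' t := by
  rw [hf.2.1 x hx, hf.2.1 y hy,
    ← intervalIntegral.integral_interval_sub_left (hf.1 y hy) (hf.1 x hx)]
  ring

lemma continuousOn (hf : MemHw0 w f f') : ContinuousOn f (Ici 0) := by
  have key : ∀ b : ℝ, 0 ≤ b → ContinuousOn f (Icc 0 b) := by
    intro b hb
    have := (continuousOn_const (c := f 0)).add
      (intervalIntegral.continuousOn_primitive_interval
        ((intervalIntegrable_iff' (by simp)).1 (hf.1 b hb)))
    rw [uIcc_of_le hb] at this
    exact this.congr fun x hx => hf.2.1 x hx.1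
  intro x hx
  have hx0 : (0 : ℝ) ≤ x := hx
  refine ((key (x + 1) (by linarith)) x ⟨hx0, by linarith⟩).mono_of_mem_nhdsWithin ?_
  rw [← Ici_inter_Iic]
  exact inter_mem_nhdsWithin _ (Iic_mem_nhds (by linarith))

lemma sub {g g' : ℝ → ℝ} (hw : IsWeight w) (hf : MemHw0 w f f') (hg : MemHw0 w g g') :
    MemHw0 w (fun x => f x - g x) (fun x => f' x - g' x) := by
  refine ⟨fun x hx => (hf.1 x hx).sub (hg.1 x hx), fun x hx => ?_, ?_, ?_⟩
  · beta_reduce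
    rw [intervalIntegral.integral_sub (hf.1 x hx) (hg.1 x hx), hf.2.1 x hx, hg.2.1 x hx]
    ring
  · rw [lintegral_weighted_sq_lt_top_iff hw.1]
    simpa only [sub_mul, Pi.sub_def] using ((hf.memLp hw).sub (hg.memLp hw)).2
  · simpa using hf.2.2.2.sub hg.2.2.2

lemma sum {ι : Type*} (hw : IsWeight w) (s : Finset ι) {F F' : ι → ℝ → ℝ}
    (hF : ∀ i, MemHw0 w (F i) (F' i)) :
    MemHw0 w (fun x => ∑ i ∈ s, F i x) (fun x => ∑ i ∈ s, F' i x) := by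
  refine ⟨fun x hx => ?_, fun x hx => ?_, ?_, ?_⟩
  · simpa only [Finset.sum_fn] using IntervalIntegrable.sum s fun i _ => (hF i).1 x hx
  · rw [intervalIntegral.integral_finsetSum fun i _ => (hF i).1 x hx, ← Finset.sum_add_distrib]
    exact Finset.sum_congr rfl fun i _ => (hF i).2.1 x hx
  · rw [lintegral_weighted_sq_lt_top_iff hw.1]
    simpa only [Finset.sum_mul] using (memLp_finsetSum s fun i _ => (hF i).memLp hw).2
  · simpa using tendsto_finsetSum s fun i _ => (hF i).2.2.2

lemma abs_sub_le (hw : IsWeight w) (hf : MemHw0 w f f') {x y : ℝ} (hx : 0 ≤ x) (hxy : x ≤ y) :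
    |f y - f x| ≤ √(∫ t in Ioi (0 : ℝ), cubeRootInv w t) * nw w f' * cubeRootInv w x := by
  have hsub : Ioc x y ⊆ Ioi 0 := fun t ht => hx.trans_lt ht.1
  have hμ : volume.restrict (Ioc x y) ≤ volPos := Measure.restrict_mono hsub le_rfl
  have hwpos : ∀ t ∈ Ioc x y, 0 < w t := fun t ht =>
    zero_lt_one.trans_le (hw.1 t (le_of_lt (hsub ht)))
  have hinv : ∀ t ∈ Ioc x y, (√(w t))⁻¹ ^ 2 ≤ cubeRootInv w x ^ 2 * cubeRootInv w t := by
    intro t ht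
    have ht0 : 0 ≤ t := le_of_lt (hsub ht)
    rw [inv_pow, Real.sq_sqrt (hwpos t ht).le,
      ← eq_inv_of_mul_eq_one_left (hw.cubeRootInv_pow_three_mul ht0)]
    have h1 := hw.cubeRootInv_anti hx ht.1.le
    have h2 := hw.cubeRootInv_pos ht0
    calc cubeRootInv w t ^ 3 = cubeRootInv w t ^ 2 * cubeRootInv w t := by ring
      _ ≤ _ := by gcongr
  have hVint : IntegrableOn (fun t => cubeRootInv w x ^ 2 * cubeRootInv w t) (Ioc x y) :=
    (hw.integrableOn_cubeRootInv.mono_set hsub).const_mul _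
  have hrmeas : AEStronglyMeasurable (fun t => (√(w t))⁻¹) (volume.restrict (Ioc x y)) :=
    (hw.aestronglyMeasurable_sqrt.mono_measure hμ).aemeasurable.inv.aestronglyMeasurable
  have hrint : IntegrableOn (fun t => (√(w t))⁻¹ ^ 2) (Ioc x y) := by
    refine Integrable.mono' hVint (hrmeas.pow 2) ?_
    filter_upwards [ae_restrict_mem measurableSet_Ioc] with t ht
    rw [Real.norm_of_nonneg (sq_nonneg _)]
    exact hinv t ht
  have hr : MemLp (fun t => (√(w t))⁻¹) (ENNReal.ofReal 2) (volume.restrict (Ioc x y)) := by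
    simpa using (memLp_two_iff_integrable_sq hrmeas).2 hrint
  have hF := hf.memLp hw
  have hF' : MemLp (fun t => f' t * √(w t)) (ENNReal.ofReal 2) (volume.restrict (Ioc x y)) := by
    simpa using hF.mono_measure hμ
  have hol := integral_mul_norm_le_Lp_mul_Lq Real.HolderConjugate.two_two hF' hr
  simp only [← Real.sqrt_eq_rpow, Real.rpow_two, Real.norm_eq_abs, sq_abs] at hol
  have hI1 : ∫ t in Ioc x y, (f' t * √(w t)) ^ 2 ≤ nw w f' ^ 2 := by
    rw [sq_nw_eq_integral hw.1 hF]
    exact setIntegral_mono_set ((memLp_two_iff_integrable_sq hF.1).1 hF)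
      (Eventually.of_forall fun t => sq_nonneg _) hsub.eventuallyLE
  have hI2 : ∫ t in Ioc x y, (√(w t))⁻¹ ^ 2 ≤
      cubeRootInv w x ^ 2 * ∫ t in Ioi (0 : ℝ), cubeRootInv w t := by
    refine (setIntegral_mono_on hrint hVint measurableSet_Ioc hinv).trans ?_
    rw [integral_const_mul]
    refine mul_le_mul_of_nonneg_left ?_ (sq_nonneg _)
    refine setIntegral_mono_set hw.integrableOn_cubeRootInv ?_ hsub.eventuallyLE
    filter_upwards [ae_restrict_mem measurableSet_Ioi] with t ht
    exact (hw.cubeRootInv_pos (le_of_lt ht)).le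
  calc |f y - f x| ≤ ∫ t in Ioc x y, |f' t| := by
        rw [hf.sub_eq_integral hx (hx.trans hxy), intervalIntegral.integral_of_le hxy]
        exact abs_integral_le_integral_abs
    _ = ∫ t in Ioc x y, |f' t * √(w t)| * |(√(w t))⁻¹| := by
        refine setIntegral_congr_fun measurableSet_Ioc fun t ht => ?_
        rw [← abs_mul, mul_assoc, mul_inv_cancel₀ (Real.sqrt_pos.2 (hwpos t ht)).ne', mul_one]
    _ ≤ _ := hol
    _ ≤ √(nw w f' ^ 2) * √(cubeRootInv w x ^ 2 * ∫ t in Ioi (0 : ℝ), cubeRootInv w t) := by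
        gcongr
    _ = _ := by
        rw [Real.sqrt_sq (nw_nonneg _ _), Real.sqrt_mul (sq_nonneg _),
          Real.sqrt_sq (hw.cubeRootInv_pos hx).le]
        ring

lemma abs_le (hw : IsWeight w) (hf : MemHw0 w f f') {x : ℝ} (hx : 0 ≤ x) :
    |f x| ≤ √(∫ t in Ioi (0 : ℝ), cubeRootInv w t) * nw w f' * cubeRootInv w x := by
  have hlim : Tendsto (fun y => |f y - f x|) atTop (nhds |0 - f x|) :=
    (hf.2.2.2.sub_const (f x)).abs
  rw [zero_sub, abs_neg] at hlim
  refine le_of_tendsto hlim ?_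
  filter_upwards [eventually_ge_atTop x] with y hy using hf.abs_sub_le hw hx hy

lemma intervalIntegrable_self (hf : MemHw0 w f f') {x : ℝ} (hx : 0 ≤ x) :
    IntervalIntegrable f volume 0 x :=
  (hf.continuousOn.mono (by rw [uIcc_of_le hx]; exact Icc_subset_Ici_self)).intervalIntegrable

lemma abs_integral_le (hw : IsWeight w) (hf : MemHw0 w f f') {x : ℝ} (hx : 0 ≤ x) :
    |∫ t in (0 : ℝ)..x, f t| ≤ √(∫ t in Ioi (0 : ℝ), cubeRootInv w t) * nw w f' *
      ∫ t in Ioi (0 : ℝ), cubeRootInv w t := by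
  have hsub : Ioc 0 x ⊆ Ioi 0 := Ioc_subset_Ioi_self
  rw [intervalIntegral.integral_of_le hx, ← integral_const_mul]
  refine (abs_integral_le_integral_abs).trans ?_
  have hint := (hw.integrableOn_cubeRootInv).const_mul
    (√(∫ t in Ioi (0 : ℝ), cubeRootInv w t) * nw w f')
  refine (setIntegral_mono_on ((intervalIntegrable_iff_integrableOn_Ioc_of_le hx).1
    (hf.intervalIntegrable_self hx)).abs (hint.mono_measure (Measure.restrict_mono hsub le_rfl))
    measurableSet_Ioc fun t ht => hf.abs_le hw (le_of_lt ht.1)).trans ?_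
  refine setIntegral_mono_set hint ?_ hsub.eventuallyLE
  filter_upwards [ae_restrict_mem measurableSet_Ioi] with t ht
  exact mul_nonneg (mul_nonneg (Real.sqrt_nonneg _) (nw_nonneg _ _))
    (hw.cubeRootInv_pos (le_of_lt ht)).le

end MemHw0

/-- `p` has derivative `p'` on `[c, d]`, with both functions bounded by `M` and `M`-Lipschitz. -/
structure C1BoundedOn (p p' : ℝ → ℝ) (c d M : ℝ) : Prop where
  hasDerivAt : ∀ y ∈ Icc c d, HasDerivAt p (p' y) y
  continuousOn : ContinuousOn p' (Icc c d)
  abs_le : ∀ y ∈ Icc c d, |p y| ≤ M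
  abs_deriv_le : ∀ y ∈ Icc c d, |p' y| ≤ M
  lipschitz : ∀ y ∈ Icc c d, ∀ z ∈ Icc c d, |p y - p z| ≤ M * |y - z|
  lipschitz_deriv : ∀ y ∈ Icc c d, ∀ z ∈ Icc c d, |p' y - p' z| ≤ M * |y - z|

lemma exists_c1BoundedOn_deriv {Ψ : ℝ → ℝ} {c d : ℝ} {U : Set ℝ} (hU : IsOpen U)
    (hcd : Icc c d ⊆ U) (hΨ : ContDiffOn ℝ 3 Ψ U) :
    ∃ M, 0 ≤ M ∧ C1BoundedOn (deriv Ψ) (deriv (deriv Ψ)) c d M := by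
  have h1 : ContDiffOn ℝ 2 (deriv Ψ) U := hΨ.deriv_of_isOpen hU (by norm_num)
  have h2 : ContDiffOn ℝ 1 (deriv (deriv Ψ)) U := h1.deriv_of_isOpen hU (by norm_num)
  have h3 : ContinuousOn (deriv (deriv (deriv Ψ))) U :=
    h2.continuousOn_deriv_of_isOpen hU (by norm_num)
  obtain ⟨M₁, hM₁⟩ := isCompact_Icc.exists_bound_of_continuousOn (h1.continuousOn.mono hcd)
  obtain ⟨M₂, hM₂⟩ := isCompact_Icc.exists_bound_of_continuousOn (h2.continuousOn.mono hcd)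
  obtain ⟨M₃, hM₃⟩ := isCompact_Icc.exists_bound_of_continuousOn (h3.mono hcd)
  have hd1 : ∀ y ∈ Icc c d, HasDerivAt (deriv Ψ) (deriv (deriv Ψ) y) y := fun y hy =>
    ((h1.differentiableOn (by norm_num)).differentiableAt (hU.mem_nhds (hcd hy))).hasDerivAt
  have hd2 : ∀ y ∈ Icc c d, HasDerivAt (deriv (deriv Ψ)) (deriv (deriv (deriv Ψ)) y) y :=
    fun y hy =>
    ((h2.differentiableOn (by norm_num)).differentiableAt (hU.mem_nhds (hcd hy))).hasDerivAt
  refine ⟨max 0 (max M₁ (max M₂ M₃)), le_max_left _ _, hd1, h2.continuousOn.mono hcd,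
    fun y hy => (hM₁ y hy).trans (by simp), fun y hy => (hM₂ y hy).trans (by simp),
    fun y hy z hz => ?_, fun y hy z hz => ?_⟩
  · exact (convex_Icc c d).norm_image_sub_le_of_norm_hasDerivWithin_le
      (fun t ht => (hd1 t ht).hasDerivWithinAt)
      (fun t ht => (hM₂ t ht).trans (by simp)) hz hy
  · exact (convex_Icc c d).norm_image_sub_le_of_norm_hasDerivWithin_le
      (fun t ht => (hd2 t ht).hasDerivWithinAt)
      (fun t ht => (hM₃ t ht).trans (by simp)) hz hy

section Component

variable {w p p' h h' : ℝ → ℝ} {c d M : ℝ}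

lemma MemHw0.hasDerivAt_integral (hh : MemHw0 w h h') {x : ℝ} (hx : 0 < x) :
    HasDerivAt (fun x => ∫ y in (0 : ℝ)..x, h y) (h x) x := by
  have hc : ContinuousOn h (Ioi 0) := hh.continuousOn.mono Ioi_subset_Ici_self
  exact intervalIntegral.integral_hasDerivAt_right (hh.intervalIntegrable_self hx.le)
    (hc.stronglyMeasurableAtFilter isOpen_Ioi x hx) (hc.continuousAt (Ioi_mem_nhds hx))

lemma MemHw0.continuousOn_integral (hh : MemHw0 w h h') (b : ℝ) (hb : 0 ≤ b) :
    ContinuousOn (fun x => ∫ y in (0 : ℝ)..x, h y) (Icc 0 b) := by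
  have := intervalIntegral.continuousOn_primitive_interval
    ((intervalIntegrable_iff' (by simp)).1 (hh.intervalIntegrable_self hb))
  rwa [uIcc_of_le hb] at this

/-- The fundamental theorem of calculus for `x ↦ p (-∫₀ˣ h)`. -/
lemma MemHw0.comp_integral_eq (hh : MemHw0 w h h') (hA : InA c d h) (hp : C1BoundedOn p p' c d M)
    {b : ℝ} (hb : 0 ≤ b) :
    IntervalIntegrable (fun x => p' (-∫ y in (0 : ℝ)..x, h y) * -h x) volume 0 b ∧
    p (-∫ y in (0 : ℝ)..b, h y) = p (-∫ y in (0 : ℝ)..(0 : ℝ), h y) +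
      ∫ x in (0 : ℝ)..b, p' (-∫ y in (0 : ℝ)..x, h y) * -h x := by
  have hmaps : MapsTo (fun x => -∫ y in (0 : ℝ)..x, h y) (Icc 0 b) (Icc c d) :=
    fun x hx => hA x hx.1
  have hcont := (hh.continuousOn_integral b hb).neg
  have hpc : ContinuousOn p (Icc c d) := fun y hy =>
    (hp.hasDerivAt y hy).continuousAt.continuousWithinAt
  have hint : IntervalIntegrable (fun x => p' (-∫ y in (0 : ℝ)..x, h y) * -h x) volume 0 b := by
    refine ContinuousOn.intervalIntegrable ?_
    rw [uIcc_of_le hb]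
    exact (hp.continuousOn.comp hcont hmaps).mul
      (hh.continuousOn.mono Icc_subset_Ici_self).neg
  refine ⟨hint, ?_⟩
  rw [intervalIntegral.integral_eq_sub_of_hasDerivAt_of_le hb (hpc.comp hcont hmaps) ?_ hint]
  · simp
  · intro x hx
    exact (hp.hasDerivAt _ (hA x hx.1.le)).comp x (hh.hasDerivAt_integral hx.1).neg

lemma memLp_const_mul_abs {f : ℝ → ℝ} (a : ℝ) (hf : MemLp (fun x => f x * √(w x)) 2 volPos) :
    MemLp (fun x => a * |f x| * √(w x)) 2 volPos := by
  refine (hf.abs.const_mul a).ae_eq (Eventually.of_forall fun x => ?_)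
  change a * |f x * √(w x)| = a * |f x| * √(w x)
  rw [abs_mul, abs_of_nonneg (Real.sqrt_nonneg _), mul_assoc]

lemma MemHw0.component (hw : IsWeight w) (hh : MemHw0 w h h') (hA : InA c d h)
    (hp : C1BoundedOn p p' c d M) :
    MemHw0 w (fun x => -(h x * p (-∫ y in (0 : ℝ)..x, h y)))
      (fun x => -(h' x) * p (-∫ y in (0 : ℝ)..x, h y)
        + h x ^ 2 * p' (-∫ y in (0 : ℝ)..x, h y)) := by
  have hprod : ∀ b : ℝ, 0 ≤ b → _ := fun b hb =>
    intervalIntegrable_mul_and_integral_eq (u := h) (q := fun x => p (-∫ y in (0 : ℝ)..x, h y)) hb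
      (hh.1 b hb) (hh.comp_integral_eq hA hp hb).1 (fun x hx => hh.2.1 x hx.1)
      (fun x hx => (hh.comp_integral_eq hA hp hx.1).2)
  have heq : (fun x => -(h' x) * p (-∫ y in (0 : ℝ)..x, h y)
        + h x ^ 2 * p' (-∫ y in (0 : ℝ)..x, h y)) = fun x =>
      -(h' x * p (-∫ y in (0 : ℝ)..x, h y) + h x * (p' (-∫ y in (0 : ℝ)..x, h y) * -h x)) := by
    funext x
    ring
  have hint : ∀ b : ℝ, 0 ≤ b → IntervalIntegrable (fun x => -(h' x) * p (-∫ y in (0 : ℝ)..x, h y)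
        + h x ^ 2 * p' (-∫ y in (0 : ℝ)..x, h y)) volume 0 b := by
    intro b hb
    rw [heq]
    exact (hprod b hb).1.neg
  have hM : 0 ≤ M := (abs_nonneg _).trans (hp.abs_le _ (hA 0 le_rfl))
  refine ⟨hint, fun b hb => ?_, ?_, ?_⟩
  · rw [heq, intervalIntegral.integral_neg]
    linarith [(hprod b hb).2]
  · rw [lintegral_weighted_sq_lt_top_iff hw.1]
    set a := √(∫ t in Ioi (0 : ℝ), cubeRootInv w t) * nw w h'
    have hdom : MemLp (fun x => M * |h' x * √(w x)| +
        (a ^ 2 * M) * (cubeRootInv w x ^ 2 * √(w x))) 2 volPos :=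
      ((hh.memLp hw).abs.const_mul M).add (hw.memLp_sq_cubeRootInv.const_mul _)
    refine lt_of_le_of_lt (eLpNorm_mono_ae_real ?_) hdom.2
    filter_upwards [ae_restrict_mem measurableSet_Ioi] with x hx
    have hx0 : 0 ≤ x := le_of_lt hx
    have hs := Real.sqrt_nonneg (w x)
    have h1 := hp.abs_le _ (hA x hx0)
    have h2 := hp.abs_deriv_le _ (hA x hx0)
    have h3 : h x ^ 2 ≤ a ^ 2 * cubeRootInv w x ^ 2 := by
      rw [← sq_abs, ← mul_pow]
      exact pow_le_pow_left₀ (abs_nonneg _) (hh.abs_le hw hx0) 2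
    rw [Real.norm_eq_abs, abs_mul, abs_mul, abs_of_nonneg hs]
    calc _ ≤ (|h' x| * M + (a ^ 2 * cubeRootInv w x ^ 2) * M) * √(w x) := by
          refine mul_le_mul_of_nonneg_right ((abs_add_le _ _).trans ?_) hs
          rw [abs_mul, abs_mul, abs_neg, abs_of_nonneg (sq_nonneg (h x))]
          gcongr
      _ = _ := by ring
  · suffices Tendsto (fun x => h x * p (-∫ y in (0 : ℝ)..x, h y)) atTop (nhds 0) by
      simpa only [neg_zero] using this.neg
    refine (squeeze_zero_norm' ?_ (by simpa using hh.2.2.2.abs.mul_const M))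
    filter_upwards [eventually_ge_atTop 0] with x hx
    rw [norm_mul]
    exact mul_le_mul_of_nonneg_left (hp.abs_le _ (hA x hx)) (abs_nonneg _)

/-- Local Lipschitz estimate for a single summand of the weak derivative of `Σ`. -/
lemma exists_nw_component_sub_le (hw : IsWeight w) (hM : 0 ≤ M) (hp : C1BoundedOn p p' c d M) :
    ∃ C, 0 ≤ C ∧ ∀ g g' h h' : ℝ → ℝ, MemHw0 w g g' → InA c d g → MemHw0 w h h' → InA c d h →
      nw w (fun x =>
          (-(g' x) * p (-∫ y in (0 : ℝ)..x, g y) + g x ^ 2 * p' (-∫ y in (0 : ℝ)..x, g y))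
          - (-(h' x) * p (-∫ y in (0 : ℝ)..x, h y) + h x ^ 2 * p' (-∫ y in (0 : ℝ)..x, h y)))
        ≤ C * ((1 + nw w h' + nw w g' + nw w g' ^ 2) * nw w (fun x => g' x - h' x)) := by
  set L := ∫ t in Ioi (0 : ℝ), cubeRootInv w t
  have hL0 : 0 ≤ L := hw.integral_cubeRootInv_nonneg
  set K := √L
  have hK0 : 0 ≤ K := Real.sqrt_nonneg _
  refine ⟨M + M * K * L + M * K ^ 4 * L + M * K ^ 3, by positivity, ?_⟩
  intro g g' h h' hg hgA hh hhA
  have hgh := hg.sub hw hh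
  set Ng := nw w g'
  set Nh := nw w h'
  set D := nw w (fun x => g' x - h' x)
  have hNg : 0 ≤ Ng := nw_nonneg _ _
  have hNh : 0 ≤ Nh := nw_nonneg _ _
  have hD : 0 ≤ D := nw_nonneg _ _
  have m1 := memLp_const_mul_abs M (hgh.memLp hw)
  have m2 := memLp_const_mul_abs (M * (K * D * L)) (hg.memLp hw)
  have m3 : MemLp (fun x => (M * (K * D * L) * (K * Ng) ^ 2 + M * (K * D) * (K * Ng + K * Nh)) *
      cubeRootInv w x ^ 2 * √(w x)) 2 volPos := by
    simpa only [← mul_assoc] using hw.memLp_sq_cubeRootInv.const_mul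
      (M * (K * D * L) * (K * Ng) ^ 2 + M * (K * D) * (K * Ng + K * Nh))
  have m12 : MemLp (fun x => (M * |g' x - h' x| + M * (K * D * L) * |g' x|) * √(w x)) 2 volPos := by
    simpa only [add_mul, Pi.add_def] using m1.add m2
  have m123 : MemLp (fun x => (M * |g' x - h' x| + M * (K * D * L) * |g' x| +
      (M * (K * D * L) * (K * Ng) ^ 2 + M * (K * D) * (K * Ng + K * Nh)) *
        cubeRootInv w x ^ 2) * √(w x)) 2 volPos := by
    simpa only [add_mul, Pi.add_def] using m12.add m3
  refine (nw_mono hw.1 m123 fun x hx => ?_).trans ?_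
  · have hx0 : 0 ≤ x := hx.le
    have hGH : |(-∫ y in (0 : ℝ)..x, g y) - (-∫ y in (0 : ℝ)..x, h y)| ≤ K * D * L := by
      have := hgh.abs_integral_le hw hx0
      rw [intervalIntegral.integral_sub (hg.intervalIntegrable_self hx0)
        (hh.intervalIntegrable_self hx0)] at this
      rwa [neg_sub_neg, abs_sub_comm]
    have hP := (hp.lipschitz _ (hgA x hx0) _ (hhA x hx0)).trans (mul_le_mul_of_nonneg_left hGH hM)
    have hP' := (hp.lipschitz_deriv _ (hgA x hx0) _ (hhA x hx0)).trans
      (mul_le_mul_of_nonneg_left hGH hM)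
    have hQ := hp.abs_le _ (hhA x hx0)
    have hQ' := hp.abs_deriv_le _ (hhA x hx0)
    have hgx : |g x| ≤ K * Ng * cubeRootInv w x := hg.abs_le hw hx0
    have hhx : |h x| ≤ K * Nh * cubeRootInv w x := hh.abs_le hw hx0
    have hdx : |g x - h x| ≤ K * D * cubeRootInv w x := hgh.abs_le hw hx0
    have hv := (hw.cubeRootInv_pos hx0).le
    generalize p (-∫ y in (0 : ℝ)..x, g y) = P at *
    generalize p (-∫ y in (0 : ℝ)..x, h y) = Q at *
    generalize p' (-∫ y in (0 : ℝ)..x, g y) = P' at *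
    generalize p' (-∫ y in (0 : ℝ)..x, h y) = Q' at *
    generalize cubeRootInv w x = v at *
    calc |(-g' x * P + g x ^ 2 * P') - (-h' x * Q + h x ^ 2 * Q')|
        = |-(Q * (g' x - h' x)) + -((P - Q) * g' x) + (P' - Q') * g x ^ 2
            + Q' * (g x - h x) * (g x + h x)| := by congr 1; ring
      _ ≤ |Q| * |g' x - h' x| + |P - Q| * |g' x| + |P' - Q'| * |g x| ^ 2
            + |Q'| * |g x - h x| * (|g x| + |h x|) := by
          refine (abs_add_le _ _).trans (add_le_add ((abs_add_le _ _).trans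
            (add_le_add ((abs_add_le _ _).trans (add_le_add ?_ ?_)) ?_)) ?_)
          · rw [abs_neg, abs_mul]
          · rw [abs_neg, abs_mul]
          · rw [abs_mul, abs_pow]
          · rw [abs_mul, abs_mul]
            gcongr
            exact abs_add_le _ _
      _ ≤ M * |g' x - h' x| + M * (K * D * L) * |g' x| + M * (K * D * L) * (K * Ng * v) ^ 2
            + M * (K * D * v) * (K * Ng * v + K * Nh * v) := by
          gcongr
      _ = _ := by ring
  · refine (nw_add_le hw.1 m12 m3).trans ?_
    refine (add_le_add_left (nw_add_le hw.1 m1 m2) _).trans ?_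
    rw [nw_const_mul hw.1, nw_const_mul hw.1, nw_const_mul hw.1, nw_abs, nw_abs,
      hw.nw_sq_cubeRootInv, abs_of_nonneg hM, abs_of_nonneg (by positivity),
      abs_of_nonneg (by positivity)]
    change M * D + M * (K * D * L) * Ng +
      (M * (K * D * L) * (K * Ng) ^ 2 + M * (K * D) * (K * Ng + K * Nh)) * K ≤ _
    calc _ = M * (1 * D) + M * K * L * (Ng * D) + M * K ^ 4 * L * (Ng ^ 2 * D)
          + M * K ^ 3 * ((Ng + Nh) * D) := by ring
      _ ≤ M * ((1 + Nh + Ng + Ng ^ 2) * D) + M * K * L * ((1 + Nh + Ng + Ng ^ 2) * D)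
          + M * K ^ 4 * L * ((1 + Nh + Ng + Ng ^ 2) * D)
          + M * K ^ 3 * ((1 + Nh + Ng + Ng ^ 2) * D) := by
          have := sq_nonneg Ng
          gcongr M * (?_ * D) + M * K * L * (?_ * D) + M * K ^ 4 * L * (?_ * D)
            + M * K ^ 3 * (?_ * D) <;> linarith
      _ = _ := by ring

end Component

/-- For every `h ∈ Πᵢ Aᵢ` the function `Σh` belongs to `H_w⁰`, and there is a constant
`C₅ > 0`, depending only on `w`, `n` and `Ψ₁,…,Ψₙ`, such that for all `g, h ∈ Πᵢ Aᵢ`: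
`‖Σg - Σh‖_w ≤ C₅ Σᵢ (1 + ‖hᵢ‖_w + ‖gᵢ‖_w + ‖gᵢ‖²_w) ‖gᵢ - hᵢ‖_w`.
In particular `Σ` is continuous. -/
theorem stmt_13 (w : ℝ → ℝ) (hw : IsWeight w) (n : ℕ) (c d : Fin n → ℝ)
    (hc : ∀ i, c i < 0) (hd : ∀ i, 0 < d i) (Ψ : Fin n → ℝ → ℝ)
    (hΨ : ∀ i, ∃ U : Set ℝ, IsOpen U ∧ Set.Icc (c i) (d i) ⊆ U ∧ ContDiffOn ℝ 3 (Ψ i) U) :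
    (∀ h h' : Fin n → ℝ → ℝ, (∀ i, MemHw0 w (h i) (h' i)) → (∀ i, InA (c i) (d i) (h i)) →
      MemHw0 w (SigmaMap Ψ h) (SigmaDeriv Ψ h h')) ∧
    ∃ C₅ > (0 : ℝ), ∀ g g' h h' : Fin n → ℝ → ℝ,
      (∀ i, MemHw0 w (g i) (g' i)) → (∀ i, InA (c i) (d i) (g i)) →
      (∀ i, MemHw0 w (h i) (h' i)) → (∀ i, InA (c i) (d i) (h i)) →
      nw w (fun x => SigmaDeriv Ψ g g' x - SigmaDeriv Ψ h h' x)
        ≤ C₅ * ∑ i, (1 + nw w (h' i) + nw w (g' i) + nw w (g' i) ^ 2) *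
            nw w (fun x => g' i x - h' i x) := by
  have hM : ∀ i, ∃ M, 0 ≤ M ∧ C1BoundedOn (deriv (Ψ i)) (deriv (deriv (Ψ i))) (c i) (d i) M := by
    intro i
    obtain ⟨U, hU, hcd, hΨU⟩ := hΨ i
    exact exists_c1BoundedOn_deriv hU hcd hΨU
  choose M hM0 hp using hM
  refine ⟨fun h h' hh hA => ?_, ?_⟩
  · have hsum := MemHw0.sum hw Finset.univ fun i => (hh i).component hw (hA i) (hp i)
    simp only [Finset.sum_neg_distrib] at hsum
    exact hsum
  · choose C hC0 hC using fun i => exists_nw_component_sub_le hw (hM0 i) (hp i)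
    refine ⟨1 + ∑ i, C i, add_pos_of_pos_of_nonneg one_pos (Finset.sum_nonneg fun i _ => hC0 i),
      fun g g' h h' hg hgA hh hhA => ?_⟩
    simp only [SigmaDeriv, ← Finset.sum_sub_distrib]
    refine (nw_sum_le hw.1 Finset.univ fun i => (((hg i).component hw (hgA i) (hp i)).sub hw
      ((hh i).component hw (hhA i) (hp i))).memLp hw).trans ?_
    rw [Finset.mul_sum]
    refine Finset.sum_le_sum fun i _ => (hC i _ _ _ _ (hg i) (hgA i) (hh i) (hhA i)).trans ?_
    refine mul_le_mul_of_nonneg_right ?_ ?_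
    · linarith [Finset.single_le_sum (fun j _ => hC0 j) (Finset.mem_univ i)]
    · have hNh := nw_nonneg w (h' i)
      have hNg := nw_nonneg w (g' i)
      exact mul_nonneg (by positivity) (nw_nonneg _ _)
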